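/- arXiv:math/0610703 — 3 statements merged into one kernel-verified Lean document; each statement's English description precedes it below -/
import Mathlib

section
/- Let E and F be finite-dimensional real normed vector spaces, Z a finite-dimensional real vector space, 𝓜 ⊆ E and 𝓝 ⊆ F open subsets. Let λ : 𝓜 → L(E, Z) and λ̃ : 𝓝 → L(F, Z) be smooth maps (Z-valued 1-forms in local coordinates) such that λ̃(y) : F → Z is a linear isomorphism for every y ∈ 𝓝. Then the following two conditions are equivalent. (a) For every x ∈ 𝓜 and every y ∈ 𝓝 there exist an open neighborhood U of x contained in 𝓜 and a smooth map G : U → 𝓝 with G(x) = y and λ̃(G(z)) ∘ DG(z) = λ(z) for all z ∈ U, where DG(z) denotes the Fréchet derivative. (b) For every x ∈ 𝓜 and y ∈ 𝓝, setting τ = λ̃(y)⁻¹ ∘ λ(x) : E → F, the exterior derivatives correspond under τ: for all u, v ∈ E, (Dλ̃(y)(τ(u)))(τ(v)) − (Dλ̃(y)(τ(v)))(τ(u)) = (Dλ(x)(u))(v) − (Dλ(x)(v))(u), where Dλ(x) ∈ L(E, L(E, Z)) and Dλ̃(y) ∈ L(F, L(F, Z)) are the Fréchet derivatives of λ and λ̃.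 -/
open Set Metric in
lemma frob_lip {E F : Type*} [NormedAddCommGroup E] [NormedSpace ℝ E]
    [NormedAddCommGroup F] [NormedSpace ℝ F]
    (φ : E × F → (E →L[ℝ] F)) (x : E) (y : F) (ρ C : ℝ)
    (hd : ∀ p ∈ closedBall (x, y) ρ, DifferentiableAt ℝ φ p)
    (hL : ∀ p ∈ closedBall (x, y) ρ, ‖fderiv ℝ φ p‖ ≤ C)
    (v : E) (hv : ‖v‖ ≤ 1) (z : E) (hz : z ∈ closedBall x ρ) :
    LipschitzOnWith C.toNNReal (fun w => φ (z, w) v) (closedBall y ρ) := by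
  refine LipschitzOnWith.of_dist_le_mul fun a ha b hb => ?_
  have hC : 0 ≤ C := le_trans (norm_nonneg (fderiv ℝ φ (z, a)))
    (hL (z, a) (by simp only [← closedBall_prod_same]; exact ⟨hz, ha⟩))
  have h := (convex_closedBall (x, y) ρ).norm_image_sub_le_of_norm_fderiv_le (𝕜 := ℝ) hd hL
    (x := (z, b)) (y := (z, a))
    (by simp only [← closedBall_prod_same]; exact ⟨hz, hb⟩)
    (by simp only [← closedBall_prod_same]; exact ⟨hz, ha⟩)
  have h2 : ‖((z, a) : E × F) - (z, b)‖ = ‖a - b‖ := by simp [Prod.norm_def]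
  rw [h2] at h
  rw [dist_eq_norm, dist_eq_norm, Real.coe_toNNReal _ hC, ← sub_apply]
  calc _ ≤ ‖φ (z, a) - φ (z, b)‖ * ‖v‖ := ContinuousLinearMap.le_opNorm _ _
    _ ≤ ‖φ (z, a) - φ (z, b)‖ * 1 := by gcongr
    _ ≤ _ := by linarith

open Set Metric in
lemma frob_curve {E F : Type*} [NormedAddCommGroup E] [NormedSpace ℝ E]
    [NormedAddCommGroup F] [NormedSpace ℝ F] [CompleteSpace F]
    (φ : E × F → (E →L[ℝ] F)) (x : E) (y : F) (ρ C : ℝ) (hρ : 0 < ρ)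
    (hd : ∀ p ∈ closedBall (x, y) ρ, DifferentiableAt ℝ φ p)
    (hM : ∀ p ∈ closedBall (x, y) ρ, ‖φ p‖ ≤ C)
    (hL : ∀ p ∈ closedBall (x, y) ρ, ‖fderiv ℝ φ p‖ ≤ C)
    (v : E) (hv : ‖v‖ ≤ 1) (hvρ : ‖v‖ ≤ ρ) (hvC : C * ‖v‖ ≤ ρ / 2) :
    ∃ γ : ℝ → F, γ 0 = y ∧ (∀ t, γ t ∈ closedBall y (ρ / 2)) ∧
      ∀ t ∈ Icc (0:ℝ) 1, HasDerivWithinAt γ (φ (x + t • v, γ t) v) (Icc 0 1) t := by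
  have hmem : ∀ t ∈ Icc (0:ℝ) 1, x + t • v ∈ closedBall x ρ := by
    intro t ht
    simp only [mem_closedBall, dist_eq_norm, add_sub_cancel_left, norm_smul, Real.norm_eq_abs,
      abs_of_nonneg ht.1]
    nlinarith [ht.2, norm_nonneg v]
  have hC : 0 ≤ C := (norm_nonneg _).trans (hM (x, y) (mem_closedBall_self hρ.le))
  have hsub : closedBall y (ρ/2) ⊆ closedBall y ρ := closedBall_subset_closedBall (by linarith)
  have hf : IsPicardLindelof (fun t w => φ (x + t • v, w) v) (tmin := 0) (tmax := 1)
      ⟨0, by simp⟩ y (ρ / 2).toNNReal 0 (ρ / 2).toNNReal C.toNNReal := by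
    have hr : ((ρ / 2).toNNReal : ℝ) = ρ / 2 := Real.coe_toNNReal _ (by linarith)
    refine ⟨?_, ?_, ?_, ?_⟩
    · intro t ht
      rw [hr]
      exact (frob_lip φ x y ρ C hd hL v hv _ (hmem t ht)).mono hsub
    · intro w hw t ht
      rw [hr] at hw
      have h1 : ContinuousAt φ (x + t • v, w) :=
        (hd _ (by simp only [← closedBall_prod_same]; exact ⟨hmem t ht, hsub hw⟩)).continuousAt
      have h2 : ContinuousAt (fun t : ℝ => φ (x + t • v, w)) t :=
        ContinuousAt.comp (f := fun t : ℝ => (x + t • v, w)) h1 (by fun_prop)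
      exact (h2.clm_apply continuousAt_const).continuousWithinAt
    · intro t ht w hw
      rw [hr] at hw ⊢
      have := hM (x + t • v, w) (by simp only [← closedBall_prod_same]; exact ⟨hmem t ht, hsub hw⟩)
      refine (ContinuousLinearMap.le_opNorm _ _).trans (le_trans ?_ hvC)
      gcongr
    · simp
  have hx : y ∈ closedBall y ((0 : NNReal) : ℝ) := by simp
  obtain ⟨α, hα⟩ := ODE.FunSpace.exists_isFixedPt_next hf hx
  refine ⟨α.compProj, ?_, ?_, fun t ht ↦ ?_⟩
  · have := ODE.FunSpace.compProj_val (α := α) (t := ⟨0, by simp⟩)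
    simp only at this
    rw [this, ← hα, ODE.FunSpace.next_apply₀]
  · intro t
    have := α.compProj_mem_closedBall hf.mul_max_le (t := t)
    rwa [Real.coe_toNNReal _ (by linarith)] at this
  · apply ODE.hasDerivWithinAt_picard_Icc (t₀ := 0) (by simp) hf.continuousOn_uncurry
      α.continuous_compProj.continuousOn
      (fun _ ht' ↦ α.compProj_mem_closedBall hf.mul_max_le)
      y ht |>.congr_of_mem _ ht
    intro t' ht'
    nth_rw 1 [← hα]
    rw [ODE.FunSpace.compProj_of_mem ht', ODE.FunSpace.next_apply]

open Set Metric in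
lemma frob_est {E F : Type*} [NormedAddCommGroup E] [NormedSpace ℝ E]
    [NormedAddCommGroup F] [NormedSpace ℝ F]
    (φ : E × F → (E →L[ℝ] F)) (x : E) (y : F) (ρ C : ℝ) (hC : 1 ≤ C)
    (hd : ∀ p ∈ closedBall (x, y) ρ, DifferentiableAt ℝ φ p)
    (hM : ∀ p ∈ closedBall (x, y) ρ, ‖φ p‖ ≤ C)
    (hL : ∀ p ∈ closedBall (x, y) ρ, ‖fderiv ℝ φ p‖ ≤ C)
    (hT : ∀ p ∈ closedBall (x, y) ρ, ∀ q ∈ closedBall (x, y) ρ,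
      ‖φ q - φ p - fderiv ℝ φ p (q - p)‖ ≤ C * ‖q - p‖ ^ 2)
    (hI : ∀ p ∈ closedBall (x, y) ρ, ∀ u v : E,
      fderiv ℝ φ p (u, φ p u) v = fderiv ℝ φ p (v, φ p v) u)
    (v h : E) (hvρ : ‖v‖ ≤ ρ) (hv' : ‖v + h‖ ≤ 1) (hvρ' : ‖v + h‖ ≤ ρ)
    (hh : C * ‖h‖ ≤ ρ / 2) (γ β : ℝ → F)
    (hγ0 : γ 0 = y) (hγm : ∀ t, γ t ∈ closedBall y (ρ / 2))
    (hγ : ∀ t ∈ Icc (0:ℝ) 1, HasDerivWithinAt γ (φ (x + t • v, γ t) v) (Icc 0 1) t)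
    (hβ0 : β 0 = y) (hβm : ∀ t, β t ∈ closedBall y (ρ / 2))
    (hβ : ∀ t ∈ Icc (0:ℝ) 1,
      HasDerivWithinAt β (φ (x + t • (v + h), β t) (v + h)) (Icc 0 1) t) :
    ‖β 1 - γ 1 - φ (x + v, γ 1) h‖ ≤ gronwallBound 0 C (2 * C ^ 3 * ‖h‖ ^ 2) 1 := by
  have hC0 : 0 ≤ C := by linarith
  have hρ : 0 ≤ ρ := (norm_nonneg _).trans hvρ
  have hmem : ∀ w : E, ‖w‖ ≤ ρ → ∀ t ∈ Icc (0:ℝ) 1, x + t • w ∈ closedBall x ρ := by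
    intro w hw t ht
    simp only [mem_closedBall, dist_eq_norm, add_sub_cancel_left, norm_smul, Real.norm_eq_abs,
      abs_of_nonneg ht.1]
    nlinarith [ht.2, norm_nonneg w]
  have hsub : closedBall y (ρ/2) ⊆ closedBall y ρ := closedBall_subset_closedBall (by linarith)
  have hp : ∀ t ∈ Icc (0:ℝ) 1, (x + t • v, γ t) ∈ closedBall (x, y) ρ := by
    intro t ht
    simp only [← closedBall_prod_same]; exact ⟨hmem v hvρ t ht, hsub (hγm t)⟩
  set η : ℝ → F := fun t => γ t + t • φ (x + t • v, γ t) h with hη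
  have hφh : ∀ t ∈ Icc (0:ℝ) 1, ‖φ (x + t • v, γ t) h‖ ≤ C * ‖h‖ := fun t ht =>
    (ContinuousLinearMap.le_opNorm _ _).trans (by gcongr; exact hM _ (hp t ht))
  have hηm : ∀ t ∈ Icc (0:ℝ) 1, η t ∈ closedBall y ρ := by
    intro t ht
    have h1 := hγm t
    have h2 := hφh t ht
    have h3 : ‖t • φ (x + t • v, γ t) h‖ ≤ C * ‖h‖ := by
      rw [norm_smul, Real.norm_eq_abs, abs_of_nonneg ht.1]
      nlinarith [ht.2, norm_nonneg (φ (x + t • v, γ t) h)]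
    rw [mem_closedBall, dist_eq_norm] at h1 ⊢
    calc ‖η t - y‖ = ‖(γ t - y) + t • φ (x + t • v, γ t) h‖ := by simp only [hη]; congr 1; abel
      _ ≤ _ := norm_add_le _ _
      _ ≤ ρ := by linarith
  have hq : ∀ t ∈ Icc (0:ℝ) 1, (x + t • (v + h), η t) ∈ closedBall (x, y) ρ := by
    intro t ht
    simp only [← closedBall_prod_same]; exact ⟨hmem _ hvρ' t ht, hηm t ht⟩
  set η' : ℝ → F := fun t => φ (x + t • v, γ t) v + (φ (x + t • v, γ t) h +
    t • (fderiv ℝ φ (x + t • v, γ t) (v, φ (x + t • v, γ t) v)) h) with hη'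
  have hηd : ∀ t ∈ Icc (0:ℝ) 1, HasDerivWithinAt η (η' t) (Icc 0 1) t := by
    intro t ht
    have h1 : HasDerivWithinAt (fun t : ℝ => (x + t • v, γ t)) (v, φ (x + t • v, γ t) v)
        (Icc 0 1) t := by
      refine HasDerivWithinAt.prodMk ?_ (hγ t ht)
      simpa using (((hasDerivAt_id t).smul_const v).const_add x).hasDerivWithinAt
    have h2 := (hd _ (hp t ht)).hasFDerivAt.comp_hasDerivWithinAt t h1
    have h3 := h2.clm_apply (hasDerivWithinAt_const t (Icc (0:ℝ) 1) h)
    have h4 := (hasDerivWithinAt_id t (Icc (0:ℝ) 1)).smul h3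
    refine ((hγ t ht).add h4).congr_deriv ?_
    simp [hη', add_comm]
  have hbound : ∀ t ∈ Icc (0:ℝ) 1,
      dist (η' t) (φ (x + t • (v + h), η t) (v + h)) ≤ 2 * C ^ 3 * ‖h‖ ^ 2 := by
    intro t ht
    have hqp : ((x + t • (v + h), η t) : E × F) - (x + t • v, γ t)
        = t • (h, φ (x + t • v, γ t) h) := by
      simp [hη, smul_add]
    have hTt := hT _ (hp t ht) _ (hq t ht)
    rw [hqp] at hTt
    have hIt := hI _ (hp t ht) v h
    have hφ := hφh t ht
    have hLt := hL _ (hp t ht)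
    simp only [hη']
    rw [hIt]
    generalize φ (x + t • (v + h), η t) = Q at *
    generalize fderiv ℝ φ (x + t • v, γ t) = D at *
    generalize φ (x + t • v, γ t) = P at *
    have hn : ‖((h, P h) : E × F)‖ ≤ C * ‖h‖ := by
      rw [Prod.norm_def]
      refine max_le ?_ hφ
      simp only
      nlinarith [norm_nonneg h]
    have hn2 : ‖t • ((h, P h) : E × F)‖ ≤ C * ‖h‖ := by
      rw [norm_smul, Real.norm_eq_abs, abs_of_nonneg ht.1]
      nlinarith [ht.2, norm_nonneg ((h, P h) : E × F)]
    have key : P v + (P h + t • (D (h, P h)) v) - Q (v + h)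
        = -((D (t • (h, P h))) h) - (Q - P - D (t • (h, P h))) (v + h) := by
      rw [map_smul]
      simp only [sub_apply, map_add, smul_apply]
      abel
    rw [dist_eq_norm, key]
    have e1 : ‖(D (t • (h, P h))) h‖ ≤ C * (C * ‖h‖) * ‖h‖ := by
      refine (ContinuousLinearMap.le_opNorm _ _).trans ?_
      gcongr
      refine (ContinuousLinearMap.le_opNorm _ _).trans ?_
      gcongr
    have e2 : ‖(Q - P - D (t • (h, P h))) (v + h)‖ ≤ C * (C * ‖h‖) ^ 2 * 1 := by
      refine (ContinuousLinearMap.le_opNorm _ _).trans ?_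
      gcongr
      exact hTt.trans (by gcongr)
    refine (norm_sub_le _ _).trans ?_
    rw [norm_neg]
    have e3 : C ^ 2 ≤ C ^ 3 := pow_le_pow_right₀ hC (by norm_num)
    nlinarith [mul_le_mul_of_nonneg_right e3 (sq_nonneg ‖h‖)]
  have hIci : ∀ {f : ℝ → F} {f' : F} {t : ℝ}, t ∈ Ico (0:ℝ) 1 →
      HasDerivWithinAt f f' (Icc 0 1) t → HasDerivWithinAt f f' (Ici t) t := by
    intro f f' t ht hf
    exact hf.mono_of_mem_nhdsWithin (Icc_mem_nhdsGE_of_mem ht)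
  have := dist_le_of_approx_trajectories_ODE_of_mem
    (v := fun t w => φ (x + t • (v + h), w) (v + h)) (s := fun _ => closedBall y ρ)
    (K := C.toNNReal) (f := β) (g := η) (f' := fun t => φ (x + t • (v + h), β t) (v + h))
    (g' := η') (a := 0) (b := 1) (εf := 0) (εg := 2 * C ^ 3 * ‖h‖ ^ 2) (δ := 0)
    (fun t ht => frob_lip φ x y ρ C hd hL _ hv' _ (hmem _ hvρ' t (Ico_subset_Icc_self ht)))
    (HasDerivWithinAt.continuousOn hβ)
    (fun t ht => hIci ht (hβ t (Ico_subset_Icc_self ht)))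
    (fun t _ => by simp)
    (fun t _ => hsub (hβm t))
    (HasDerivWithinAt.continuousOn hηd)
    (fun t ht => hIci ht (hηd t (Ico_subset_Icc_self ht)))
    (fun t ht => hbound t (Ico_subset_Icc_self ht))
    (fun t ht => hηm t (Ico_subset_Icc_self ht))
    (by simp [hη, hβ0, hγ0]) 1 (by simp)
  rw [Real.coe_toNNReal _ hC0, dist_eq_norm] at this
  simpa [hη, sub_sub] using this

open Set Metric Topology in
lemma frob_local {E F : Type*} [NormedAddCommGroup E] [NormedSpace ℝ E]
    [NormedAddCommGroup F] [NormedSpace ℝ F] [CompleteSpace F]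
    (φ : E × F → (E →L[ℝ] F)) (W : Set (E × F)) (hW : IsOpen W)
    (hφ : ContDiffOn ℝ 2 φ W)
    (hI : ∀ p ∈ W, ∀ u v : E, fderiv ℝ φ p (u, φ p u) v = fderiv ℝ φ p (v, φ p v) u)
    (x : E) (y : F) (hxy : (x, y) ∈ W) :
    ∃ U : Set E, IsOpen U ∧ x ∈ U ∧ ∃ G : E → F, G x = y ∧
      ∀ z ∈ U, (z, G z) ∈ W ∧ HasFDerivAt G (φ (z, G z)) z := by
  have hcd : ContDiffAt ℝ 2 φ (x, y) := hφ.contDiffAt (hW.mem_nhds hxy)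
  have hcd' : ContDiffAt ℝ 1 (fderiv ℝ φ) (x, y) := hcd.fderiv_right (by norm_num)
  obtain ⟨K, s, hs, hK⟩ := hcd'.exists_lipschitzOnWith
  obtain ⟨ρ, hρ, hball⟩ : ∃ ρ > 0, closedBall (x, y) ρ ⊆
      {p | p ∈ W ∧ ‖φ p‖ < ‖φ (x, y)‖ + 1 ∧ ‖fderiv ℝ φ p‖ < ‖fderiv ℝ φ (x, y)‖ + 1 ∧ p ∈ s} := by
    rw [← Metric.nhds_basis_closedBall.mem_iff]
    have hev2 : ∀ᶠ p in 𝓝 (x, y), ‖fderiv ℝ φ p‖ < ‖fderiv ℝ φ (x, y)‖ + 1 := by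
      have hc : ContinuousAt (fun p => ‖fderiv ℝ φ p‖) (x, y) := by
        have hc1 : Continuous (fun T : E × F →L[ℝ] E →L[ℝ] F => ‖T‖) :=
          continuous_norm (E := E × F →L[ℝ] E →L[ℝ] F)
        exact hc1.continuousAt.comp hcd'.continuousAt
      exact hc.eventually_lt continuousAt_const (lt_add_one ‖fderiv ℝ φ (x, y)‖)
    filter_upwards [hW.mem_nhds hxy, hs,
      hcd.continuousAt.norm.eventually_lt continuousAt_const
        (show ‖φ (x, y)‖ < ‖φ (x, y)‖ + 1 by linarith),
      hev2] with p h1 h2 h3 h4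
    exact ⟨h1, h3, h4, h2⟩
  obtain ⟨C, hC1, hCφ, hCD, hCK⟩ : ∃ C : ℝ, 1 ≤ C ∧ ‖φ (x, y)‖ + 1 ≤ C ∧
      ‖fderiv ℝ φ (x, y)‖ + 1 ≤ C ∧ (K : ℝ) ≤ C := by
    refine ⟨‖φ (x, y)‖ + ‖fderiv ℝ φ (x, y)‖ + K + 1, ?_, ?_, ?_, ?_⟩ <;>
    linarith [norm_nonneg (φ (x, y)), norm_nonneg (fderiv ℝ φ (x, y)), K.2,
      show (0:ℝ) ≤ K from K.2]
  have hd : ∀ p ∈ closedBall (x, y) ρ, DifferentiableAt ℝ φ p := fun p hp =>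
    (hφ.contDiffAt (hW.mem_nhds (hball hp).1)).differentiableAt (by norm_num)
  have hM : ∀ p ∈ closedBall (x, y) ρ, ‖φ p‖ ≤ C := fun p hp => by
    linarith [(hball hp).2.1]
  have hL : ∀ p ∈ closedBall (x, y) ρ, ‖fderiv ℝ φ p‖ ≤ C := fun p hp => by
    linarith [(hball hp).2.2.1]
  have hT : ∀ p ∈ closedBall (x, y) ρ, ∀ q ∈ closedBall (x, y) ρ,
      ‖φ q - φ p - fderiv ℝ φ p (q - p)‖ ≤ C * ‖q - p‖ ^ 2 := by
    intro p hp q hq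
    have hseg : segment ℝ p q ⊆ closedBall (x, y) ρ :=
      (convex_closedBall (x, y) ρ).segment_subset hp hq
    have := (convex_segment (𝕜 := ℝ) p q).norm_image_sub_le_of_norm_fderiv_le' (𝕜 := ℝ)
      (f := φ) (φ := fderiv ℝ φ p) (C := C * ‖q - p‖) (fun r hr => hd r (hseg hr))
      (fun r hr => ?_) (left_mem_segment ℝ p q) (right_mem_segment ℝ p q)
    · rw [pow_two, ← mul_assoc]; exact this
    · have h1 := hK.dist_le_mul r (hball (hseg hr)).2.2.2 p (hball hp).2.2.2
      rw [dist_eq_norm, dist_eq_norm] at h1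
      refine h1.trans ?_
      have h2 : ‖r - p‖ ≤ ‖q - p‖ := by
        have := norm_sub_le_of_mem_segment hr
        simpa [norm_sub_rev] using this
      gcongr
  have hCpos : 0 < C := by linarith
  set δ : ℝ := min (min 1 ρ) (ρ / 2 / C) with hδ
  have hδ0 : 0 < δ := by positivity
  have hδ1 : ∀ v : E, ‖v‖ < δ → ‖v‖ ≤ 1 ∧ ‖v‖ ≤ ρ ∧ C * ‖v‖ ≤ ρ / 2 := by
    intro v hv
    simp only [hδ, lt_min_iff] at hv
    refine ⟨hv.1.1.le, hv.1.2.le, ?_⟩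
    have := (lt_div_iff₀ hCpos).1 hv.2
    linarith
  have hex : ∀ v : E, ∃ γ : ℝ → F, ‖v‖ < δ → (γ 0 = y ∧ (∀ t, γ t ∈ closedBall y (ρ / 2)) ∧
      ∀ t ∈ Icc (0:ℝ) 1, HasDerivWithinAt γ (φ (x + t • v, γ t) v) (Icc 0 1) t) := by
    intro v
    by_cases hv : ‖v‖ < δ
    · obtain ⟨h1, h2, h3⟩ := hδ1 v hv
      obtain ⟨γ, hγ⟩ := frob_curve φ x y ρ C hρ hd hM hL v h1 h2 h3
      exact ⟨γ, fun _ => hγ⟩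
    · exact ⟨0, fun h => absurd h hv⟩
  choose γ hγ using hex
  refine ⟨ball x δ, isOpen_ball, mem_ball_self hδ0, fun z => γ (z - x) 1, ?_, ?_⟩
  · simp only [sub_self]
    obtain ⟨h0, -, h2⟩ := hγ 0 (by simpa using hδ0)
    rw [← h0]
    refine constant_of_has_deriv_right_zero (HasDerivWithinAt.continuousOn h2) (fun t ht => ?_) 1
      (by simp)
    have := h2 t (Ico_subset_Icc_self ht)
    rw [map_zero] at this
    exact this.mono_of_mem_nhdsWithin (Icc_mem_nhdsGE_of_mem ht)
  · intro z hz
    obtain ⟨v, rfl⟩ : ∃ v, z = x + v := ⟨z - x, by simp⟩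
    have hv : ‖v‖ < δ := by simpa [dist_eq_norm] using hz
    obtain ⟨a0, a1, a2⟩ := hγ v hv
    obtain ⟨b1, b2, b3⟩ := hδ1 v hv
    have hin : (x + v, γ v 1) ∈ closedBall (x, y) ρ := by
      simp only [← closedBall_prod_same]
      refine ⟨?_, closedBall_subset_closedBall (by linarith) (a1 1)⟩
      simpa [dist_eq_norm] using b2
    simp only [add_sub_cancel_left]
    refine ⟨(hball hin).1, ?_⟩
    rw [hasFDerivAt_iff_isLittleO_nhds_zero]
    have hbig : (fun h : E => γ (x + v + h - x) 1 - γ (x + v - x) 1 - φ (x + v, γ v 1) h)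
        =O[𝓝 0] (fun h : E => ‖h‖ ^ 2) := by
      refine Asymptotics.IsBigO.of_bound (gronwallBound 0 C (2 * C ^ 3) 1) ?_
      have e1 : ∀ᶠ h : E in 𝓝 0, ‖h‖ < δ := by
        filter_upwards [ball_mem_nhds (0:E) hδ0] with h hh
        simpa using hh
      have e2 : ∀ᶠ h : E in 𝓝 0, ‖v + h‖ < δ := by
        have : ContinuousAt (fun h : E => ‖v + h‖) 0 := by fun_prop
        exact this.eventually_lt continuousAt_const (by simpa using hv)
      filter_upwards [e1, e2] with h h1 h2
      obtain ⟨c0, c1, c2⟩ := hγ (v + h) h2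
      obtain ⟨d1, d2, d3⟩ := hδ1 (v + h) h2
      have := frob_est φ x y ρ C hC1 hd hM hL hT (fun p hp => hI p (hball hp).1) v h b2 d1 d2
        (hδ1 h h1).2.2 (γ v) (γ (v + h)) a0 a1 a2 c0 c1 c2
      have e3 : x + v + h - x = v + h := by abel
      rw [e3, add_sub_cancel_left]
      refine this.trans (le_of_eq ?_)
      rw [gronwallBound_of_K_ne_0 hCpos.ne', gronwallBound_of_K_ne_0 hCpos.ne']
      simp only [norm_pow, norm_norm]
      ring
    exact hbig.trans_isLittleO (Asymptotics.isLittleO_norm_pow_id (by norm_num))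

lemma frob_smooth {E F : Type*} [NormedAddCommGroup E] [NormedSpace ℝ E]
    [NormedAddCommGroup F] [NormedSpace ℝ F]
    (φ : E × F → (E →L[ℝ] F)) (W : Set (E × F))
    (hφ : ContDiffOn ℝ (⊤ : ℕ∞) φ W) (U : Set E) (hU : IsOpen U) (G : E → F)
    (hG : ∀ z ∈ U, (z, G z) ∈ W ∧ HasFDerivAt G (φ (z, G z)) z) :
    ContDiffOn ℝ (⊤ : ℕ∞) G U := by
  rw [contDiffOn_infty]
  intro n
  induction n with
  | zero =>
    exact contDiffOn_zero.2 fun z hz => (hG z hz).2.continuousAt.continuousWithinAt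
  | succ n ih =>
    push_cast
    rw [contDiffOn_succ_iff_fderiv_of_isOpen hU]
    refine ⟨fun z hz => (hG z hz).2.differentiableAt.differentiableWithinAt, by simp, ?_⟩
    have h1 : ContDiffOn ℝ n (fun z => φ (z, G z)) U :=
      (hφ.of_le (by exact_mod_cast le_top)).comp (contDiffOn_id.prodMk ih) (fun z hz => (hG z hz).1)
    exact h1.congr fun z hz => (hG z hz).2.fderiv

/-- differentiating `lamT (w) ∘ A = lam`. -/
lemma frob_diff {X E F Z : Type*} [NormedAddCommGroup X] [NormedSpace ℝ X]
    [NormedAddCommGroup E] [NormedSpace ℝ E]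
    [NormedAddCommGroup F] [NormedSpace ℝ F] [NormedAddCommGroup Z] [NormedSpace ℝ Z]
    {A : X → (E →L[ℝ] F)} {g : X → F} {k : X → E} {lam : E → E →L[ℝ] Z} {lamT : F → F →L[ℝ] Z}
    {p : X} {A' : X →L[ℝ] E →L[ℝ] F} {g' : X →L[ℝ] F} {k' : X →L[ℝ] E}
    (hA : HasFDerivAt A A' p) (hg : HasFDerivAt g g' p) (hk : HasFDerivAt k k' p)
    (hl : DifferentiableAt ℝ lam (k p)) (hlT : DifferentiableAt ℝ lamT (g p))
    (h : ∀ᶠ q in nhds p, (lamT (g q)).comp (A q) = lam (k q)) (d : X) (v : E) :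
    fderiv ℝ lamT (g p) (g' d) (A p v) + lamT (g p) (A' d v) = fderiv ℝ lam (k p) (k' d) v := by
  have h1 := (hlT.hasFDerivAt.comp p hg).clm_comp hA
  have h2 := hl.hasFDerivAt.comp p hk
  have h3 := (h2.congr_of_eventuallyEq h).unique h1
  have h4 := congrArg (fun T : X →L[ℝ] E →L[ℝ] Z => T d v) h3
  simp at h4
  rw [h4, add_comm]

/-- Frobenius-type theorem for the PDE `G*λ̃ = λ` in local coordinates.
Let `E`, `F`, `Z` be finite-dimensional real normed vector spaces, `𝓜 ⊆ E`, `𝓝 ⊆ F` open,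
`λ : 𝓜 → L(E, Z)`, `λ̃ : 𝓝 → L(F, Z)` smooth with `λ̃ y` a linear isomorphism for all `y ∈ 𝓝`.
Then local solvability of `λ̃(G(z)) ∘ DG(z) = λ(z)` with arbitrarily prescribed value `G x = y`
(condition (a)) is equivalent to the integrability condition matching the exterior derivatives
of `λ` and `λ̃` via `τ = λ̃(y)⁻¹ ∘ λ(x)` (condition (b)). -/
theorem frobenius_pullback_forms
    {E : Type*} [NormedAddCommGroup E] [NormedSpace ℝ E] [FiniteDimensional ℝ E]
    {F : Type*} [NormedAddCommGroup F] [NormedSpace ℝ F] [FiniteDimensional ℝ F]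
    {Z : Type*} [NormedAddCommGroup Z] [NormedSpace ℝ Z] [FiniteDimensional ℝ Z]
    (𝓜 : Set E) (h𝓜 : IsOpen 𝓜) (𝓝 : Set F) (h𝓝 : IsOpen 𝓝)
    (lam : E → (E →L[ℝ] Z)) (hlam : ContDiffOn ℝ (⊤ : ℕ∞) lam 𝓜)
    (lamT : F → (F →L[ℝ] Z)) (hlamT : ContDiffOn ℝ (⊤ : ℕ∞) lamT 𝓝)
    (hbij : ∀ y ∈ 𝓝, Function.Bijective (lamT y)) :
    (∀ x ∈ 𝓜, ∀ y ∈ 𝓝, ∃ U : Set E, IsOpen U ∧ x ∈ U ∧ U ⊆ 𝓜 ∧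
        ∃ G : E → F, ContDiffOn ℝ (⊤ : ℕ∞) G U ∧ (∀ z ∈ U, G z ∈ 𝓝) ∧ G x = y ∧
          ∀ z ∈ U, (lamT (G z)).comp (fderiv ℝ G z) = lam z)
      ↔
    (∀ x ∈ 𝓜, ∀ y ∈ 𝓝, ∀ τ : E →L[ℝ] F, (lamT y).comp τ = lam x →
        ∀ u v : E,
          fderiv ℝ lamT y (τ u) (τ v) - fderiv ℝ lamT y (τ v) (τ u)
            = fderiv ℝ lam x u v - fderiv ℝ lam x v u) := by
  have hdl : ∀ x ∈ 𝓜, DifferentiableAt ℝ lam x := fun x hx =>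
    (hlam.contDiffAt (h𝓜.mem_nhds hx)).differentiableAt (by simp)
  have hdlT : ∀ y ∈ 𝓝, DifferentiableAt ℝ lamT y := fun y hy =>
    (hlamT.contDiffAt (h𝓝.mem_nhds hy)).differentiableAt (by simp)
  constructor
  · intro H x hx y hy τ hτ u v
    obtain ⟨U, hU, hxU, hUM, G, hG, hGN, rfl, hGe⟩ := H x hx y hy
    have hcd : ContDiffAt ℝ (⊤ : ℕ∞) G x := hG.contDiffAt (hU.mem_nhds hxU)
    have hτe : fderiv ℝ G x = τ := by
      ext w
      apply (hbij _ hy).1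
      have := (hGe x hxU).trans hτ.symm
      exact congrArg (fun T : E →L[ℝ] Z => T w) this
    have hcd' : ContDiffAt ℝ 1 (fderiv ℝ G) x := hcd.fderiv_right
      (WithTop.coe_le_coe.2 (le_top : (1 + 1 : ℕ∞) ≤ ⊤))
    have hA : HasFDerivAt (fderiv ℝ G) (fderiv ℝ (fderiv ℝ G) x) x :=
      (hcd'.differentiableAt (by norm_num)).hasFDerivAt
    have hg : HasFDerivAt G τ x := hτe ▸ (hcd.differentiableAt (by simp)).hasFDerivAt
    have hev : ∀ᶠ q in nhds x, (lamT (G q)).comp (fderiv ℝ G q) = lam (id q) := by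
      filter_upwards [hU.mem_nhds hxU] with q hq using hGe q hq
    have key := frob_diff hA hg (hasFDerivAt_id x) (hdl x hx) (hdlT _ hy) hev
    have hsymm : IsSymmSndFDerivAt ℝ G x := hcd.isSymmSndFDerivAt (by
      rw [minSmoothness_of_isRCLikeNormedField]
      exact WithTop.coe_le_coe.2 (le_top : (2 : ℕ∞) ≤ ⊤))
    have k1 := key u v
    have k2 := key v u
    rw [hτe] at k1 k2
    rw [hsymm v u] at k2
    simp only [id, ContinuousLinearMap.id_apply] at k1 k2
    rw [← k1, ← k2]
    abel
  · intro H x hx y hy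
    set φ : E × F → (E →L[ℝ] F) := fun p => ((lamT p.2).inverse).comp (lam p.1) with hφdef
    have hequiv : ∀ w ∈ 𝓝, ∃ e : F ≃L[ℝ] Z, (e : F →L[ℝ] Z) = lamT w := by
      intro w hw
      refine ⟨(LinearEquiv.ofBijective (lamT w : F →ₗ[ℝ] Z) (hbij w hw)).toContinuousLinearEquiv, ?_⟩
      ext a
      rfl
    have hφe : ∀ p ∈ 𝓜 ×ˢ 𝓝, (lamT p.2).comp (φ p) = lam p.1 := by
      intro p hp
      obtain ⟨e, he⟩ := hequiv p.2 hp.2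
      ext a
      simp [hφdef, ← he]
    have hW : IsOpen (𝓜 ×ˢ 𝓝) := h𝓜.prod h𝓝
    have hφs : ContDiffOn ℝ (⊤ : ℕ∞) φ (𝓜 ×ˢ 𝓝) := by
      intro p hp
      obtain ⟨e, he⟩ := hequiv p.2 hp.2
      refine ContDiffAt.contDiffWithinAt ?_
      have h1 : ContDiffAt ℝ (⊤ : ℕ∞) (fun p : E × F => lam p.1) p :=
        ContDiffAt.comp p (hlam.contDiffAt (h𝓜.mem_nhds hp.1)) contDiffAt_fst
      have h2 : ContDiffAt ℝ (⊤ : ℕ∞) (fun p : E × F => lamT p.2) p :=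
        ContDiffAt.comp p (hlamT.contDiffAt (h𝓝.mem_nhds hp.2)) contDiffAt_snd
      have h3 : ContDiffAt ℝ (⊤ : ℕ∞) (ContinuousLinearMap.inverse : (F →L[ℝ] Z) → (Z →L[ℝ] F))
        (lamT p.2) := he ▸ contDiffAt_map_inverse e
      exact (ContDiffAt.comp p h3 h2).clm_comp h1
    have hI : ∀ p ∈ 𝓜 ×ˢ 𝓝, ∀ u v : E,
        fderiv ℝ φ p (u, φ p u) v = fderiv ℝ φ p (v, φ p v) u := by
      intro p hp u v
      have hA : HasFDerivAt φ (fderiv ℝ φ p) p :=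
        ((hφs.contDiffAt (hW.mem_nhds hp)).differentiableAt (by simp)).hasFDerivAt
      have hev : ∀ᶠ q in nhds p, (lamT q.2).comp (φ q) = lam q.1 := by
        filter_upwards [hW.mem_nhds hp] with q hq using hφe q hq
      have key := frob_diff hA hasFDerivAt_snd hasFDerivAt_fst (hdl _ hp.1) (hdlT _ hp.2) hev
      have k1 := key (u, φ p u) v
      have k2 := key (v, φ p v) u
      have k3 := H p.1 hp.1 p.2 hp.2 (φ p) (hφe p hp) u v
      simp only [ContinuousLinearMap.coe_fst', ContinuousLinearMap.coe_snd'] at k1 k2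
      rw [← k1, ← k2] at k3
      apply (hbij _ hp.2).1
      rw [← sub_eq_zero] at k3 ⊢
      rw [← neg_eq_zero, ← k3]
      abel
    obtain ⟨U, hU, hxU, G, hGx, hG⟩ := frob_local φ (𝓜 ×ˢ 𝓝) hW
      (hφs.of_le (WithTop.coe_le_coe.2 (le_top : (2 : ℕ∞) ≤ ⊤))) hI x y ⟨hx, hy⟩
    refine ⟨U, hU, hxU, fun z hz => (hG z hz).1.1, G, frob_smooth φ _ hφs U hU G hG,
      fun z hz => (hG z hz).1.2, hGx, fun z hz => ?_⟩
    rw [(hG z hz).2.fderiv]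
    exact hφe _ (hG z hz).1
end

section
/- Let S and X be topological spaces, π : S → X a continuous local homeomorphism, with S Hausdorff and X locally connected. Assume that every point of X has an open neighborhood U that is quasi-fundamental for π, i.e., such that for every x ∈ U and every s ∈ π⁻¹(x) there exists a continuous map σ : U → S with π ∘ σ equal to the inclusion of U into X and σ(x) = s. Then π is a covering map. -/
/-- Let `S`, `X` be topological spaces, `π : S → X` a continuous local
homeomorphism, with `S` Hausdorff and `X` locally connected. If every point of `X` has an open
neighborhood `U` that is quasi-fundamental for `π` (i.e. for every `x ∈ U` and every
`s ∈ π⁻¹(x)` there is a continuous local section `σ` of `π` on `U` with `σ x = s`), then `π` is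
a covering map. -/
theorem presheaf_quasiFundamental_isCoveringMap
    {S X : Type*} [TopologicalSpace S] [TopologicalSpace X]
    [T2Space S] [LocallyConnectedSpace X]
    (π : S → X) (hπ : IsLocalHomeomorph π)
    (hquasi : ∀ x : X, ∃ U : Set X, IsOpen U ∧ x ∈ U ∧
      ∀ y ∈ U, ∀ s : S, π s = y →
        ∃ σ : X → S, ContinuousOn σ U ∧ (∀ z ∈ U, π (σ z) = z) ∧ σ y = s) :
    IsCoveringMap π := by
  intro x
  obtain ⟨U, hUo, hxU, hU⟩ := hquasi x
  let V : Set X := connectedComponentIn U x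
  have hVo : IsOpen V := hUo.connectedComponentIn
  have hxV : x ∈ V := mem_connectedComponentIn hxU
  have hVc : IsPreconnected V := isPreconnected_connectedComponentIn
  have hVU : V ⊆ U := connectedComponentIn_subset U x
  have hdisc : DiscreteTopology (π ⁻¹' {x}) := by
    rw [discreteTopology_iff_isOpen_singleton]
    intro s
    obtain ⟨W, hWo, hsW, hWi⟩ := hπ.isLocallyInjective s.1
    have hW : ({s} : Set (π ⁻¹' {x})) = Subtype.val ⁻¹' W := by
      ext t
      constructor
      · rintro rfl
        exact hsW
      · intro ht
        exact Subtype.ext (hWi ht hsW (Eq.trans t.2 (Eq.symm s.2)))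
    rw [hW]
    exact hWo.preimage continuous_subtype_val
  have huniq : ∀ g₁ g₂ : X → S, ContinuousOn g₁ V → ContinuousOn g₂ V →
      (∀ z ∈ V, π (g₁ z) = z) → (∀ z ∈ V, π (g₂ z) = z) → ∀ a ∈ V, g₁ a = g₂ a →
      ∀ z ∈ V, g₁ z = g₂ z := by
    intro g₁ g₂ h₁ h₂ e₁ e₂ a ha hae
    exact (T2Space.isSeparatedMap π).eqOn_of_comp_eqOn hπ.isLocallyInjective hVc h₁ h₂
      (fun z hz => (e₁ z hz).trans (e₂ z hz).symm) ha hae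
  have hsec : ∀ y ∈ V, ∀ s : S, π s = y →
      ∃ σ : X → S, ContinuousOn σ V ∧ (∀ z ∈ V, π (σ z) = z) ∧ σ y = s := by
    intro y hy s hs
    obtain ⟨σ, h1, h2, h3⟩ := hU y (hVU hy) s hs
    exact ⟨σ, h1.mono hVU, fun z hz => h2 z (hVU hz), h3⟩
  choose σ hσc hσπ hσx using fun s : π ⁻¹' {x} => hsec x hxV s.1 s.2
  let G : V × (π ⁻¹' {x}) → π ⁻¹' V := fun p =>
    ⟨σ p.2 p.1, by
      change π (σ p.2 p.1) ∈ V
      rw [hσπ p.2 p.1 p.1.2]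
      exact p.1.2⟩
  have hsc : ∀ s, Continuous fun v : V => σ s v := fun s =>
    (hσc s).comp_continuous continuous_subtype_val fun v => v.2
  have hso : ∀ s, IsOpenMap fun v : V => σ s v := by
    intro s
    refine (IsLocalHomeomorph.of_comp ?_ hπ (hsc s)).isOpenMap
    have : (π ∘ fun v : V => σ s v) = Subtype.val := funext fun v => hσπ s v v.2
    rw [this]
    exact hVo.isOpenEmbedding_subtypeVal.isLocalHomeomorph
  have hGc : Continuous G := by
    refine Continuous.subtype_mk ?_ _
    exact continuous_prod_of_discrete_right.mpr hsc
  have hGo : IsOpenMap G := by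
    refine IsOpenMap.subtype_mk ?_ _
    intro W hW
    have : (fun p : V × (π ⁻¹' {x}) => σ p.2 p.1) '' W =
        ⋃ s, (fun v : V => σ s v) '' {v | (v, s) ∈ W} := by
      ext t
      simp only [Set.mem_image, Set.mem_iUnion, Set.mem_ofPred_eq]
      constructor
      · rintro ⟨⟨v, s⟩, h, rfl⟩
        exact ⟨s, v, h, rfl⟩
      · rintro ⟨s, v, h, rfl⟩
        exact ⟨(v, s), h, rfl⟩
    rw [this]
    exact isOpen_iUnion fun s => hso s _ (hW.preimage (by fun_prop))
  have hGb : Function.Bijective G := by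
    constructor
    · rintro ⟨v, s⟩ ⟨w, t⟩ h
      have h' : σ s v = σ t w := congrArg Subtype.val h
      have hvw : v = w := by
        apply Subtype.ext
        rw [← hσπ s v v.2, h', hσπ t w w.2]
      subst hvw
      have := huniq _ _ (hσc s) (hσc t) (hσπ s) (hσπ t) v v.2 h' x hxV
      rw [hσx, hσx] at this
      rw [Subtype.ext this]
    · rintro ⟨t, ht⟩
      obtain ⟨τ, h1, h2, h3⟩ := hsec (π t) ht t rfl
      refine ⟨(⟨π t, ht⟩, ⟨τ x, h2 x hxV⟩), Subtype.ext ?_⟩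
      change σ ⟨τ x, h2 x hxV⟩ (π t) = t
      refine Eq.trans ?_ h3
      exact huniq _ _ (hσc _) h1 (hσπ _) h2 x hxV (hσx _) (π t) ht
  let H := (Equiv.ofBijective G hGb).toHomeomorphOfContinuousOpen hGc hGo
  refine ⟨hdisc, V, hxV, hVo, hVo.preimage hπ.continuous, H.symm, fun t => ?_⟩
  obtain ⟨p, rfl⟩ := H.surjective t
  rw [H.symm_apply_apply]
  exact (hσπ p.2 p.1 p.1.2).symm
end

section
/- Let X be a locally connected topological space and let 𝔓 be a presheaf of sets over X having the uniqueness property: for every connected open U ⊆ X and every nonempty open V ⊆ U, the restriction map 𝔓_{U,V} : 𝔓(U) → 𝔓(V) is injective. Then for all open sets U, U' ⊆ X and all sections f ∈ 𝔓(U), f' ∈ 𝔓(U'), the set A = { x ∈ U ∩ U' : f and f' have the same germ at x } — that is, the set of x ∈ U ∩ U' admitting an open neighborhood W ⊆ U ∩ U' with 𝔓_{U,W}(f) = 𝔓_{U',W}(f') — is both open and closed in U ∩ U'. -/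
open TopologicalSpace

universe u v

/-- A presheaf of sets over a topological space `X`: to each open set `U ⊆ X` it assigns a set
`sec U` of "sections over `U`", and to each inclusion of opens `V ⊆ U` a restriction map
`res : sec U → sec V`, functorially. -/
structure PresheafOfSets (X : Type u) [TopologicalSpace X] where
  sec : Opens X → Type v
  res : ∀ {U V : Opens X}, V ≤ U → sec U → sec V
  res_self : ∀ (U : Opens X) (f : sec U), res le_rfl f = f
  res_res : ∀ {U V W : Opens X} (hVU : V ≤ U) (hWV : W ≤ V) (f : sec U),
    res hWV (res hVU f) = res (hWV.trans hVU) f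

/-- Let `X` be a locally connected topological space and `𝔓` a presheaf of sets
over `X` with the uniqueness property (restriction from a connected open set to a nonempty open
subset is injective).  For opens `U`, `U'` and sections `f ∈ 𝔓(U)`, `f' ∈ 𝔓(U')`, the set `A` of
points of `U ∩ U'` at which `f` and `f'` have the same germ (i.e. which have an open neighborhood
`W ⊆ U ∩ U'` with `𝔓_{U,W}(f) = 𝔓_{U',W}(f')`) is both open and closed in `U ∩ U'`. -/
theorem presheaf_germAgreement_clopen
    {X : Type u} [TopologicalSpace X] [LocallyConnectedSpace X]
    (P : PresheafOfSets.{u, v} X)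
    (huniq : ∀ (U V : Opens X), IsPreconnected (U : Set X) → (V : Set X).Nonempty →
      ∀ hVU : V ≤ U, Function.Injective (P.res hVU))
    (U U' : Opens X) (f : P.sec U) (f' : P.sec U')
    (A : Set X)
    (hA : A = {x : X | ∃ W : Opens X, x ∈ W ∧ ∃ hW : W ≤ U ⊓ U',
      P.res (hW.trans inf_le_left) f = P.res (hW.trans inf_le_right) f'}) :
    IsOpen (Subtype.val ⁻¹' A : Set ((U ⊓ U' : Opens X) : Set X)) ∧
    IsClosed (Subtype.val ⁻¹' A : Set ((U ⊓ U' : Opens X) : Set X)) := by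
  subst hA
  constructor
  · apply IsOpen.preimage continuous_subtype_val
    rw [isOpen_iff_forall_mem_open]
    rintro x ⟨W, hx, hW, h⟩
    exact ⟨W, fun y hy => ⟨W, hy, hW, h⟩, W.isOpen, hx⟩
  · rw [← isOpen_compl_iff, isOpen_iff_forall_mem_open]
    rintro ⟨x, hxU⟩ hx
    obtain ⟨C, hCs, hCo, hxC, hC⟩ := locallyConnectedSpace_iff_subsets_isOpen_isConnected.mp
      ‹LocallyConnectedSpace X› x _ ((U ⊓ U').isOpen.mem_nhds hxU)
    refine ⟨Subtype.val ⁻¹' C, ?_, hCo.preimage continuous_subtype_val, hxC⟩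
    rintro ⟨y, hyU⟩ hyC ⟨W, hyW, hW, h⟩
    apply hx
    have hCU : (⟨C, hCo⟩ : Opens X) ≤ U ⊓ U' := hCs
    refine ⟨⟨C, hCo⟩, hxC, hCU, ?_⟩
    apply huniq ⟨C, hCo⟩ (⟨C, hCo⟩ ⊓ W) hC.isPreconnected ⟨y, hyC, hyW⟩ inf_le_left
    have h2 := congrArg (P.res (inf_le_right : (⟨C, hCo⟩ ⊓ W : Opens X) ≤ W)) h
    rw [P.res_res, P.res_res] at h2 ⊢
    exact h2
end
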